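/- arXiv:math/9807077 — 3 statements merged into one kernel-verified Lean document; each statement's English description precedes it below -/
import Mathlib

section
/- Let V be a vertex operator algebra and W a weak V-module. For u, v ∈ V, the adjoint vertex operators Y*(u,x) on the full dual space W*, defined by ⟨Y*(v,x)α, w⟩ = ⟨α, Y(e^{xL(1)}(−x^{−2})^{L(0)}v, x^{−1})w⟩, satisfy the commutator formula [Y*(u,x₁), Y*(v,x₂)] = Res_{x₀} x₂^{−1} δ((x₁−x₀)/x₂) Y*(Y(u,x₀)v, x₂) as formal operator series on W*, and moreover Y*(L(−1)v, x) = (d/dx)Y*(v,x). -/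
noncomputable section

/-- The generalized binomial coefficient `C(m, i)` for `m ∈ ℤ`, `i ∈ ℕ`,
as a complex number: `m(m-1)⋯(m-i+1)/i!`. -/
def cchoose (m : ℤ) (i : ℕ) : ℂ :=
  (∏ j ∈ Finset.range i, ((m : ℂ) - (j : ℂ))) / (Nat.factorial i : ℂ)

/-- A vertex operator algebra `V = ⊕ₙ V₍ₙ₎` over `ℂ`.  The vertex operator map is
recorded through its modes `op u n v = uₙ v` (so `Y(u,x)v = Σₙ uₙv x^{-n-1}`), with
vacuum `one`, conformal vector `omega` (with `L(k) = ω_{k+1}`), central charge `cc`,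
weight grading `wtSpace` with projections `proj`.  The Jacobi identity is recorded in
the equivalent form of the Borcherds identity on modes. -/
structure VOA where
  carrier : Type
  [grp : AddCommGroup carrier]
  [mdl : Module ℂ carrier]
  op : carrier → ℤ → carrier → carrier
  one : carrier
  omega : carrier
  wtSpace : ℤ → Submodule ℂ carrier
  proj : ℤ → carrier → carrier
  cc : ℂ
  op_linear_left : ∀ (n : ℤ) (w : carrier), IsLinearMap ℂ fun u => op u n w
  op_linear_right : ∀ (u : carrier) (n : ℤ), IsLinearMap ℂ (op u n)
  trunc : ∀ u v : carrier, ∃ N : ℤ, ∀ n : ℤ, N ≤ n → op u n v = 0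
  one_op : ∀ (n : ℤ) (v : carrier), op one n v = if n = -1 then v else 0
  create_nonneg : ∀ (v : carrier) (n : ℤ), 0 ≤ n → op v n one = 0
  create : ∀ v : carrier, op v (-1) one = v
  borcherds : ∀ (u v w : carrier) (l m n : ℤ),
    (∑ᶠ i : ℕ, cchoose m i • op (op u (l + (i : ℤ)) v) (m + n - (i : ℤ)) w)
      = ∑ᶠ i : ℕ, ((-1 : ℂ) ^ i * cchoose l i) •
          (op u (l + m - (i : ℤ)) (op v (n + (i : ℤ)) w)
            - ((-1 : ℂ) ^ l) • op v (l + n - (i : ℤ)) (op u (m + (i : ℤ)) w))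
  proj_linear : ∀ n : ℤ, IsLinearMap ℂ (proj n)
  proj_mem : ∀ (n : ℤ) (v : carrier), proj n v ∈ wtSpace n
  proj_eq : ∀ n : ℤ, ∀ v ∈ wtSpace n, proj n v = v
  proj_ne : ∀ m n : ℤ, m ≠ n → ∀ v ∈ wtSpace m, proj n v = 0
  proj_finite : ∀ v : carrier, (Function.support fun n => proj n v).Finite
  proj_sum : ∀ v : carrier, (∑ᶠ n : ℤ, proj n v) = v
  fd : ∀ n : ℤ, FiniteDimensional ℂ (wtSpace n)
  lower_trunc : ∃ N : ℤ, ∀ n : ℤ, n < N → wtSpace n = ⊥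
  one_wt : one ∈ wtSpace 0
  omega_wt : omega ∈ wtSpace 2
  op_wt : ∀ k m n : ℤ, ∀ u ∈ wtSpace k, ∀ v ∈ wtSpace m, op u n v ∈ wtSpace (k + m - n - 1)
  L_zero : ∀ n : ℤ, ∀ v ∈ wtSpace n, op omega 1 v = (n : ℂ) • v
  L_neg_one : ∀ (u : carrier) (n : ℤ) (w : carrier),
    op (op omega 0 u) n w = (-(n : ℂ)) • op u (n - 1) w
  virasoro : ∀ (m n : ℤ) (v : carrier),
    op omega (m + 1) (op omega (n + 1) v) - op omega (n + 1) (op omega (m + 1) v)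
      = ((m : ℂ) - (n : ℂ)) • op omega (m + n + 1) v
        + (if m + n = 0 then (((m : ℂ) ^ 3 - (m : ℂ)) / 12) * cc else 0) • v

attribute [instance] VOA.grp VOA.mdl

namespace VOA

variable (V : VOA)

/-- The Virasoro operator `L(k) = ω_{k+1}`. -/
def L (k : ℤ) (v : V.carrier) : V.carrier := V.op V.omega (k + 1) v

/-- The positive-weight part `V₊ = ⊕_{n ≥ 1} V₍ₙ₎`. -/
def pos : Submodule ℂ V.carrier := ⨆ (n : ℤ) (_ : 1 ≤ n), V.wtSpace n

/-- Zhu's subspace `C₂(V) = span{u₋₂v : u, v ∈ V}`. -/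
def C2 : Submodule ℂ V.carrier :=
  Submodule.span ℂ {x : V.carrier | ∃ u v : V.carrier, x = V.op u (-2) v}

/-- The subspace `C₁(V) = span(v₋₁V₊ (v ∈ V₊) together with L(-1)V)`. -/
def C1 : Submodule ℂ V.carrier :=
  Submodule.span ℂ
    ({x : V.carrier | ∃ u ∈ V.pos, ∃ v ∈ V.pos, x = V.op u (-1) v}
      ∪ {x : V.carrier | ∃ v : V.carrier, x = V.op V.omega 0 v})

/-- Iterated application of modes: `iterApply [(u¹,n₁),…,(uʳ,n_r)] w = u¹_{n₁} ⋯ uʳ_{n_r} w`. -/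
def iterApply : List (V.carrier × ℤ) → V.carrier → V.carrier
  | [], w => w
  | p :: l, w => V.op p.1 p.2 (iterApply l w)

/-- `U ⊆ V` generates `V` as a vertex operator algebra:  `V` is linearly spanned by
the elements `u¹_{n₁} ⋯ uʳ_{n_r} 1` with `uⁱ ∈ U`, `n_i ∈ ℤ`. -/
def generates (U : Set V.carrier) : Prop :=
  Submodule.span ℂ {x : V.carrier | ∃ l : List (V.carrier × ℤ),
    (∀ p ∈ l, p.1 ∈ U) ∧ x = V.iterApply l V.one} = ⊤

/-- `V` is finitely generated as a vertex operator algebra. -/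
def FinitelyGenerated : Prop := ∃ S : Finset V.carrier, V.generates ↑S

end VOA

/-- A weak `V`-module: all axioms of a module (truncation, vacuum, Jacobi identity in
Borcherds form) except those involving gradings. -/
structure WeakModule (V : VOA) where
  carrier : Type
  [grp : AddCommGroup carrier]
  [mdl : Module ℂ carrier]
  op : V.carrier → ℤ → carrier → carrier
  op_linear_left : ∀ (n : ℤ) (w : carrier), IsLinearMap ℂ fun u => op u n w
  op_linear_right : ∀ (u : V.carrier) (n : ℤ), IsLinearMap ℂ (op u n)
  trunc : ∀ (u : V.carrier) (w : carrier), ∃ N : ℤ, ∀ n : ℤ, N ≤ n → op u n w = 0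
  one_op : ∀ (n : ℤ) (w : carrier), op V.one n w = if n = -1 then w else 0
  borcherds : ∀ (u v : V.carrier) (w : carrier) (l m n : ℤ),
    (∑ᶠ i : ℕ, cchoose m i • op (V.op u (l + (i : ℤ)) v) (m + n - (i : ℤ)) w)
      = ∑ᶠ i : ℕ, ((-1 : ℂ) ^ i * cchoose l i) •
          (op u (l + m - (i : ℤ)) (op v (n + (i : ℤ)) w)
            - ((-1 : ℂ) ^ l) • op v (l + n - (i : ℤ)) (op u (m + (i : ℤ)) w))

attribute [instance] WeakModule.grp WeakModule.mdl

namespace WeakModule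

variable {V : VOA} (W : WeakModule V)

/-- `L(0)` acting on a weak module, as a linear map. -/
def L0 : W.carrier →ₗ[ℂ] W.carrier := IsLinearMap.mk' _ (W.op_linear_right V.omega 1)

/-- The `L(0)`-eigenspace of eigenvalue `h`. -/
def eig (h : ℂ) : Submodule ℂ W.carrier :=
  LinearMap.ker (W.L0 - h • (LinearMap.id : W.carrier →ₗ[ℂ] W.carrier))

/-- The coefficient `v*ₙ` of the adjoint vertex operator
`⟨Y*(v,x)α, w⟩ = ⟨α, Y(e^{xL(1)}(-x^{-2})^{L(0)}v, x^{-1})w⟩` acting on the full dual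
space: for `v` homogeneous of weight `h`,
`(v*ₙ α)(w) = (-1)^h Σ_{i≥0} (1/i!) α((L(1)^i v)_{2h-n-i-2} w)`, extended to general
`v` via the weight-space projections. -/
def dmode (v : V.carrier) (n : ℤ) (α : W.carrier → ℂ) (w : W.carrier) : ℂ :=
  ∑ᶠ h : ℤ, ∑ᶠ i : ℕ,
    ((-1 : ℂ) ^ h / (Nat.factorial i : ℂ)) *
      α (W.op ((V.L 1)^[i] (V.proj h v)) (2 * h - n - (i : ℤ) - 2) w)

/-- `D(W) ⊆ W*`: the linear functionals `α` on `W` such that for every `v ∈ V`,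
`Y*(v,x)α ∈ W*((x))`, i.e. `v*ₙ α = 0` for `n` sufficiently large. -/
def DW : Set (W.carrier → ℂ) :=
  {α | IsLinearMap ℂ α ∧
    ∀ v : V.carrier, ∃ N : ℤ, ∀ n : ℤ, N ≤ n → ∀ w : W.carrier, W.dmode v n α w = 0}

/-- A subspace stable under all modes of all vertex operators, i.e. a `V`-submodule. -/
def IsStable (S : Submodule ℂ W.carrier) : Prop :=
  ∀ (v : V.carrier) (n : ℤ), ∀ m ∈ S, W.op v n m ∈ S

/-- An irreducible (nonzero, no proper nonzero stable subspaces) `V`-submodule. -/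
def IsIrreducibleSub (S : Submodule ℂ W.carrier) : Prop :=
  S ≠ ⊥ ∧ W.IsStable S ∧
    ∀ T : Submodule ℂ W.carrier, W.IsStable T → T ≤ S → T = ⊥ ∨ T = S

/-- A stable subspace which is an ordinary module: `L(0)` acts semisimply on it with
finite-dimensional eigenspaces, and for each `h` the eigenvalues `h + m` do not occur
for `m` a sufficiently negative integer. -/
def IsOrdinarySub (S : Submodule ℂ W.carrier) : Prop :=
  S ≤ (⨆ h : ℂ, W.eig h ⊓ S) ∧ (∀ h : ℂ, FiniteDimensional ℂ ↥(W.eig h ⊓ S)) ∧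
    ∀ h : ℂ, ∃ N : ℤ, ∀ m : ℤ, m ≤ N → W.eig (h + (m : ℂ)) ⊓ S = ⊥

/-- The weak module `W` is irreducible. -/
def IsIrreducible : Prop :=
  (⊥ : Submodule ℂ W.carrier) ≠ ⊤ ∧
    ∀ S : Submodule ℂ W.carrier, W.IsStable S → S = ⊥ ∨ S = ⊤

/-- `Cₙ(W) = span{v₋ₙw : v ∈ V, w ∈ W}`. -/
def Cn (n : ℤ) : Submodule ℂ W.carrier :=
  Submodule.span ℂ {x : W.carrier | ∃ (v : V.carrier) (w : W.carrier), x = W.op v (-n) w}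

/-- `B(W) = span(u₋₁W (u ∈ V₊) together with v₀W (v homogeneous, wt v ≥ 2))`. -/
def BW : Submodule ℂ W.carrier :=
  Submodule.span ℂ
    ({x : W.carrier | ∃ v ∈ V.pos, ∃ w : W.carrier, x = W.op v (-1) w}
      ∪ {x : W.carrier | ∃ k : ℤ, 2 ≤ k ∧ ∃ v ∈ V.wtSpace k, ∃ w : W.carrier, x = W.op v 0 w})

/-- Zhu's subspace `O(W) = span{Σ_{i≥0} C(wt v, i) v_{i-2} w}` so that `A(W) = W/O(W)`. -/
def OW : Submodule ℂ W.carrier :=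
  Submodule.span ℂ
    {x : W.carrier | ∃ (k : ℤ) (v : V.carrier), v ∈ V.wtSpace k ∧
      ∃ w : W.carrier, x = ∑ᶠ i : ℕ, cchoose k i • W.op v ((i : ℤ) - 2) w}

/-- A subspace `T ⊇ O(W)` of `W` is closed under the Frenkel–Zhu left and right
`A(V)`-actions `v * w = Σᵢ C(wt v, i) v_{i-1} w` and `w * v = Σᵢ C(wt v - 1, i) v_{i-1} w`;
for `T ⊇ O(W)` this expresses that `T/O(W)` is an `A(V)`-sub-bimodule of `A(W)`. -/
def BimoduleClosed (T : Submodule ℂ W.carrier) : Prop :=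
  ∀ k : ℤ, ∀ v ∈ V.wtSpace k, ∀ w ∈ T,
    (∑ᶠ i : ℕ, cchoose k i • W.op v ((i : ℤ) - 1) w) ∈ T ∧
    (∑ᶠ i : ℕ, cchoose (k - 1) i • W.op v ((i : ℤ) - 1) w) ∈ T

/-- Equivalence (isomorphism) of weak modules. -/
def Equiv (M N : WeakModule V) : Prop :=
  ∃ e : M.carrier ≃ₗ[ℂ] N.carrier,
    ∀ (v : V.carrier) (n : ℤ) (w : M.carrier), e (M.op v n w) = N.op v n (e w)

end WeakModule

/-- `V` is of class 𝒜: `L(0)` acts semisimply on every weak `V`-module. -/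
def VOA.classA (V : VOA) : Prop :=
  ∀ M : WeakModule V, (⨆ h : ℂ, M.eig h) = ⊤

/-- `V` is regular: every weak `V`-module is a direct sum of irreducible ordinary
`V`-modules. -/
def VOA.regular (V : VOA) : Prop :=
  ∀ M : WeakModule V, ∃ (ι : Type) (S : ι → Submodule ℂ M.carrier),
    (∀ i, M.IsIrreducibleSub (S i) ∧ M.IsOrdinarySub (S i)) ∧
    (∀ i, Disjoint (S i) (⨆ (j : ι) (_ : j ≠ i), S j)) ∧ (⨆ i, S i) = ⊤

/-- A generalized `V`-module: a weak module with a semisimple `L(0)`-action, graded by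
the `L(0)`-eigenvalues, with weight-space projections `projW`. -/
structure GenModule (V : VOA) extends WeakModule V where
  wt : ℂ → Submodule ℂ carrier
  projW : ℂ → carrier → carrier
  projW_linear : ∀ h : ℂ, IsLinearMap ℂ (projW h)
  projW_mem : ∀ (h : ℂ) (w : carrier), projW h w ∈ wt h
  projW_eq : ∀ h : ℂ, ∀ w ∈ wt h, projW h w = w
  projW_ne : ∀ g h : ℂ, g ≠ h → ∀ w ∈ wt g, projW h w = 0
  projW_finite : ∀ w : carrier, (Function.support fun h => projW h w).Finite
  projW_sum : ∀ w : carrier, (∑ᶠ h : ℂ, projW h w) = w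
  wt_L0 : ∀ h : ℂ, ∀ w ∈ wt h, op V.omega 1 w = h • w
  wt_op : ∀ k : ℤ, ∀ v ∈ V.wtSpace k, ∀ (h : ℂ) (n : ℤ), ∀ w ∈ wt h,
    op v n w ∈ wt (h + (k : ℂ) - (n : ℂ) - 1)

/-- An ordinary `V`-module: a generalized module whose weight spaces are
finite-dimensional and whose weights are truncated from below in each coset `h + ℤ`. -/
structure OrdModule (V : VOA) extends GenModule V where
  wt_fd : ∀ h : ℂ, FiniteDimensional ℂ ↥(wt h)
  wt_lower : ∀ h : ℂ, ∃ N : ℤ, ∀ m : ℤ, m ≤ N → wt (h + (m : ℂ)) = ⊥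

namespace GenModule

variable {V : VOA} (W : GenModule V)

/-- `W₊ = ⊕_{Re h > 0} W₍ₕ₎`. -/
def posW : Submodule ℂ W.carrier := ⨆ (h : ℂ) (_ : 0 < h.re), W.wt h

/-- `C₁(W) = span(v₋₁W₊ (v ∈ V₊) together with L(-1)W)`. -/
def C1W : Submodule ℂ W.carrier :=
  Submodule.span ℂ
    ({x : W.carrier | ∃ v ∈ V.pos, ∃ w ∈ W.posW, x = W.op v (-1) w}
      ∪ {x : W.carrier | ∃ w : W.carrier, x = W.op V.omega 0 w})

/-- The restricted dual `W' = ⊕ₕ W₍ₕ₎* ⊆ W*`: the linear functionals vanishing on all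
but finitely many weight spaces. -/
def restrictedDual : Set (W.carrier → ℂ) :=
  {α | IsLinearMap ℂ α ∧ {h : ℂ | ∃ w ∈ W.wt h, α w ≠ 0}.Finite}

end GenModule

/-- `D(W)⁰`: the sum of the `L(0)`-eigenspaces of the weak module `D(W) ⊆ W*`, where
`L*(0) = ω*₁` acts on `α ∈ W*` by `(L*(0)α)(w) = α(L(0)w)`. -/
def OrdModule.DW0 {V : VOA} (W : OrdModule V) : Set (W.carrier → ℂ) :=
  {α | ∃ (S : Finset ℂ) (f : ℂ → (W.carrier → ℂ)),
    (∀ h ∈ S, f h ∈ W.toWeakModule.DW ∧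
      ∀ w : W.carrier, f h (W.op V.omega 1 w) = h * f h w) ∧
    α = ∑ h ∈ S, f h}

/-- An ℕ-gradable weak `V`-module: a weak module with an ℕ-grading
`W = ⊕_{n∈ℕ} W(n)` with `v_m W(n) ⊆ W(wt v + n - m - 1)` (graded pieces of negative
index are zero). -/
structure NGradedModule (V : VOA) extends WeakModule V where
  gr : ℤ → Submodule ℂ carrier
  gr_neg : ∀ n : ℤ, n < 0 → gr n = ⊥
  gr_sup : (⨆ n : ℤ, gr n) = ⊤
  gr_indep : ∀ n : ℤ, Disjoint (gr n) (⨆ (m : ℤ) (_ : m ≠ n), gr m)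
  gr_op : ∀ k : ℤ, ∀ v ∈ V.wtSpace k, ∀ m n : ℤ, ∀ w ∈ gr n,
    op v m w ∈ gr (k + n - m - 1)

/-- An intertwining operator of type `(W₃; W₁ W₂)` in the sense of
Frenkel–Huang–Lepowsky, recorded through its complex-indexed modes
`I w₁ h w₂ = (w₁)ₕ w₂` (so `Y(w₁,x)w₂ = Σ_{h∈ℂ} (w₁)ₕ w₂ x^{-h-1}`):
linearity, truncation, the `L(-1)`-derivative property, and the Jacobi identity in
component (Borcherds) form. -/
def IsIntertwiner {V : VOA} (W1 W2 W3 : OrdModule V)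
    (I : W1.carrier → ℂ → W2.carrier → W3.carrier) : Prop :=
  (∀ (h : ℂ) (w2 : W2.carrier), IsLinearMap ℂ fun w1 => I w1 h w2) ∧
  (∀ (w1 : W1.carrier) (h : ℂ), IsLinearMap ℂ (I w1 h)) ∧
  (∀ (w1 : W1.carrier) (w2 : W2.carrier) (h : ℂ),
    ∃ N : ℤ, ∀ n : ℤ, N ≤ n → I w1 (h + (n : ℂ)) w2 = 0) ∧
  (∀ (w1 : W1.carrier) (h : ℂ) (w2 : W2.carrier),
    I (W1.op V.omega 0 w1) h w2 = (-h) • I w1 (h - 1) w2) ∧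
  (∀ (u : V.carrier) (w1 : W1.carrier) (w2 : W2.carrier) (l m : ℤ) (h : ℂ),
    (∑ᶠ i : ℕ, cchoose m i • I (W1.op u (l + (i : ℤ)) w1) ((m : ℂ) + h - (i : ℂ)) w2)
      = ∑ᶠ i : ℕ, ((-1 : ℂ) ^ i * cchoose l i) •
          (W3.op u (l + m - (i : ℤ)) (I w1 (h + (i : ℂ)) w2)
            - ((-1 : ℂ) ^ l) • I w1 ((l : ℂ) + h - (i : ℂ)) (W2.op u (m + (i : ℤ)) w2)))

/-- The fusion rule `dim I(W₃; W₁W₂)` is finite: the space of intertwining operators of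
the indicated type is finite-dimensional. -/
def FusionFinite {V : VOA} (W1 W2 W3 : OrdModule V) : Prop :=
  FiniteDimensional ℂ
    ↥(Submodule.span ℂ {I : W1.carrier → ℂ → W2.carrier → W3.carrier |
        IsIntertwiner W1 W2 W3 I})

end


/-! ### Binomial coefficients -/

theorem cchoose_zero (m : ℤ) : cchoose m 0 = 1 := by simp [cchoose]

theorem cchoose_succ_mul (m : ℤ) (c : ℕ) :
    cchoose m (c + 1) * ((c : ℂ) + 1) = cchoose m c * ((m : ℂ) - c) := by
  have h1 : (c.factorial : ℂ) ≠ 0 := by exact_mod_cast Nat.factorial_ne_zero c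
  have h2 : (c : ℂ) + 1 ≠ 0 := by exact_mod_cast Nat.succ_ne_zero c
  simp only [cchoose, Finset.prod_range_succ, Nat.factorial_succ]
  push_cast
  field_simp

theorem cchoose_eq_ring (m : ℤ) (c : ℕ) : cchoose m c = Ring.choose (m : ℂ) c := by
  rw [Ring.choose_eq_smul, cchoose, ← Polynomial.aeval_eq_smeval,
    ← descPochhammer_eval_eq_prod_range, smul_eq_mul, div_eq_inv_mul,
    ← descPochhammer_map (algebraMap ℤ ℂ), Polynomial.eval_map_algebraMap]

theorem cchoose_pascal (m : ℤ) (c : ℕ) :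
    cchoose (m + 1) (c + 1) = cchoose m c + cchoose m (c + 1) := by
  simp only [cchoose_eq_ring]
  push_cast
  exact Ring.choose_succ_succ _ _

theorem cchoose_reflect (m : ℤ) (c : ℕ) :
    cchoose m c = (-1 : ℂ) ^ c * cchoose (c - 1 - m) c := by
  unfold cchoose
  rw [← mul_div_assoc]
  congr 1
  rw [← Finset.prod_range_reflect]
  have : (-1 : ℂ) ^ c = ∏ _j ∈ Finset.range c, (-1 : ℂ) := by simp
  rw [this, ← Finset.prod_mul_distrib]
  refine Finset.prod_congr rfl fun j hj => ?_
  have hj := Finset.mem_range.mp hj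
  rw [Nat.cast_sub (by omega), Nat.cast_sub (by omega)]
  push_cast
  ring

theorem cchoose_vandermonde (m A : ℤ) (j : ℕ) :
    ∑ i ∈ Finset.range (j + 1), (-1 : ℂ) ^ i * cchoose m i * cchoose (A - i) (j - i)
      = cchoose (A - m) j := by
  have h := Ring.add_choose_eq (R := ℂ) (r := ((m : ℤ) : ℂ)) (s := ((j - A - 1 : ℤ) : ℂ)) j
    (Commute.all _ _)
  rw [← Int.cast_add, ← cchoose_eq_ring, Finset.Nat.sum_antidiagonal_eq_sum_range_succ_mk] at h
  rw [cchoose_reflect (A - m) j, show (j : ℤ) - 1 - (A - m) = m + (j - A - 1) by ring, h,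
    Finset.mul_sum]
  refine Finset.sum_congr rfl fun i hi => ?_
  have hi := Finset.mem_range.mp hi
  have e : (((j - i : ℕ) : ℤ) - 1 - (A - i)) = j - A - 1 := by
    rw [Nat.cast_sub (by omega)]; ring
  rw [cchoose_reflect (A - i) (j - i), e]
  simp only [← cchoose_eq_ring]
  have : (-1 : ℂ) ^ j = (-1) ^ i * (-1) ^ (j - i) := by
    rw [← pow_add]; congr 1; omega
  rw [this]; ring

theorem cchoose_zero_succ (i : ℕ) : cchoose 0 (i + 1) = 0 := by
  unfold cchoose
  rw [Finset.prod_eq_zero (i := 0)] <;> simp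

theorem cchoose_two (i : ℕ) : cchoose 2 i = ((Nat.choose 2 i : ℕ) : ℂ) := by
  rw [cchoose_eq_ring]
  exact_mod_cast Ring.choose_natCast (R := ℂ) 2 i

theorem cchoose_neg_two (i : ℕ) : (-1 : ℂ) ^ i * cchoose (-2) i = (i : ℂ) + 1 := by
  induction i with
  | zero => simp [cchoose_zero]
  | succ i ih =>
    have h2 : (i : ℂ) + 1 ≠ 0 := by exact_mod_cast Nat.succ_ne_zero i
    have h := cchoose_succ_mul (-2) i
    have h3 : cchoose (-2) (i + 1) = cchoose (-2) i * (((-2 : ℤ) : ℂ) - i) / (i + 1) := by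
      rw [← h]; field_simp
    rw [h3, pow_succ]
    push_cast
    field_simp
    linear_combination (((i : ℂ) + 2)) * ih

/-! ### Finite sums -/

theorem sum_shift {M : Type*} [AddCommGroup M] (K : ℕ) (F : ℕ → M) (h0 : F 0 = 0) (hK : F K = 0) :
    ∑ c ∈ Finset.range K, F (c + 1) = ∑ c ∈ Finset.range K, F c := by
  have h1 := Finset.sum_range_succ F K
  have h2 := Finset.sum_range_succ' F K
  rw [h1, h0, hK, add_zero, add_zero] at h2
  exact h2.symm

theorem sum_diag {M : Type*} [AddCommGroup M] [Module ℂ M] (K : ℕ) (f : ℕ → ℕ → ℂ) (Z : ℕ → M)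
    (hZ : ∀ j, K ≤ j → Z j = 0) :
    ∑ i ∈ Finset.range K, ∑ c ∈ Finset.range K, f i c • Z (i + c)
      = ∑ j ∈ Finset.range K, (∑ i ∈ Finset.range (j + 1), f i (j - i)) • Z j := by
  have h := Finset.sum_range_diag_flip K (fun i c => f i c • Z (i + c))
  calc _ = ∑ i ∈ Finset.range K, ∑ c ∈ Finset.range (K - i), f i c • Z (i + c) := by
        refine Finset.sum_congr rfl fun i _ => ?_
        symm
        refine Finset.sum_subset ?_ ?_
        · intro x; simp only [Finset.mem_range]; omega
        · intro x _ hx2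
          simp only [Finset.mem_range] at hx2
          rw [hZ _ (by omega), smul_zero]
    _ = _ := by
        rw [← h]
        refine Finset.sum_congr rfl fun j _ => ?_
        rw [Finset.sum_smul]
        refine Finset.sum_congr rfl fun i hi => ?_
        have hi := Finset.mem_range.mp hi
        rw [show i + (j - i) = j by omega]

/-- coefficients of the divided powers of the derivation -/
noncomputable def gco (A : ℤ) (k a b c : ℕ) : ℂ :=
  if a + b + c = k then cchoose (A - a) c / (a.factorial * b.factorial) else 0

theorem gco_rec (A : ℤ) (k a b c : ℕ) :
    ((k : ℂ) + 1) * gco A (k + 1) a b c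
      = (if c = 0 then 0 else
            gco A k a b (c - 1) * ((A : ℂ) - 2 * a - ((c - 1 : ℕ) : ℂ)))
        + (if a = 0 then 0 else gco A k (a - 1) b c)
        + (if b = 0 then 0 else gco A k a (b - 1) c) := by
  by_cases hk : a + b + c = k + 1
  swap
  · have e1 : c ≠ 0 → a + b + (c - 1) ≠ k := by omega
    have e2 : a ≠ 0 → a - 1 + b + c ≠ k := by omega
    have e3 : b ≠ 0 → a + (b - 1) + c ≠ k := by omega
    simp only [gco, hk, if_false, mul_zero]
    have f1 : (if c = 0 then (0 : ℂ) else (if a + b + (c - 1) = k then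
        cchoose (A - a) (c - 1) / (a.factorial * b.factorial) else 0) *
          ((A : ℂ) - 2 * a - ((c - 1 : ℕ) : ℂ))) = 0 := by
      by_cases h : c = 0
      · rw [if_pos h]
      · rw [if_neg h, if_neg (e1 h), zero_mul]
    have f2 : (if a = 0 then (0 : ℂ) else (if a - 1 + b + c = k then
        cchoose (A - (a - 1 : ℕ)) c / ((a - 1).factorial * b.factorial) else 0)) = 0 := by
      by_cases h : a = 0
      · rw [if_pos h]
      · rw [if_neg h, if_neg (e2 h)]
    have f3 : (if b = 0 then (0 : ℂ) else (if a + (b - 1) + c = k then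
        cchoose (A - a) c / (a.factorial * (b - 1).factorial) else 0)) = 0 := by
      by_cases h : b = 0
      · rw [if_pos h]
      · rw [if_neg h, if_neg (e3 h)]
    rw [f1, f2, f3]; simp
  have hk' : (k : ℂ) + 1 = a + b + c := by exact_mod_cast hk.symm
  have t1 : (if c = 0 then 0 else
          gco A k a b (c - 1) * ((A : ℂ) - 2 * a - ((c - 1 : ℕ) : ℂ)))
      = (c * cchoose (A - a) c - a * (if c = 0 then 0 else cchoose (A - a) (c - 1)))
        / (a.factorial * b.factorial) := by
    rcases c with _ | c
    · simp
    · have := cchoose_succ_mul (A - a) c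
      simp only [Nat.succ_ne_zero, if_false, Nat.add_sub_cancel, gco]
      rw [if_pos (by omega)]
      push_cast at this ⊢
      linear_combination (-1 / (a.factorial * b.factorial : ℂ)) * this
  have t2 : (if a = 0 then 0 else gco A k (a - 1) b c)
      = a * (cchoose (A - a) c + (if c = 0 then 0 else cchoose (A - a) (c - 1)))
        / (a.factorial * b.factorial) := by
    rcases a with _ | a
    · simp
    · simp only [Nat.succ_ne_zero, if_false, Nat.add_sub_cancel, gco]
      rw [if_pos (by omega)]
      have h1 : (a.factorial : ℂ) ≠ 0 := by exact_mod_cast Nat.factorial_ne_zero a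
      have h2 : (a : ℂ) + 1 ≠ 0 := by exact_mod_cast Nat.succ_ne_zero a
      have h3 : (b.factorial : ℂ) ≠ 0 := by exact_mod_cast Nat.factorial_ne_zero b
      have h4 : cchoose (A - a) c = cchoose (A - (a + 1 : ℕ)) c
          + (if c = 0 then 0 else cchoose (A - (a + 1 : ℕ)) (c - 1)) := by
        rcases c with _ | c
        · simp [cchoose_zero]
        · have := cchoose_pascal (A - (a + 1 : ℕ)) c
          rw [show A - ((a + 1 : ℕ) : ℤ) + 1 = A - a by push_cast; ring] at this
          simp [this, add_comm]
      rw [h4, Nat.factorial_succ]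
      push_cast
      field_simp
  have t3 : (if b = 0 then 0 else gco A k a (b - 1) c)
      = b * cchoose (A - a) c / (a.factorial * b.factorial) := by
    rcases b with _ | b
    · simp
    · simp only [Nat.succ_ne_zero, if_false, Nat.add_sub_cancel, gco]
      rw [if_pos (by omega)]
      have h1 : (a.factorial : ℂ) ≠ 0 := by exact_mod_cast Nat.factorial_ne_zero a
      have h2 : (b : ℂ) + 1 ≠ 0 := by exact_mod_cast Nat.succ_ne_zero b
      have h3 : (b.factorial : ℂ) ≠ 0 := by exact_mod_cast Nat.factorial_ne_zero b
      rw [Nat.factorial_succ]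
      push_cast
      field_simp
  rw [t1, t2, t3, gco, if_pos hk, hk']
  ring

theorem leibniz_pow {M : Type*} [AddCommGroup M] [Module ℂ M] (D : M →ₗ[ℂ] M)
    (e : ℕ → ℕ → ℕ → M) (A : ℤ) (K : ℕ) (hK : 0 < K)
    (ha : ∀ a b c, K ≤ a → e a b c = 0) (hb : ∀ a b c, K ≤ b → e a b c = 0)
    (hc : ∀ a b c, K ≤ c → e a b c = 0)
    (hD : ∀ a b c, D (e a b c)
      = ((A : ℂ) - 2 * a - c) • e a b (c + 1) + e (a + 1) b c + e a (b + 1) c) (k : ℕ) :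
    (D^[k]) (e 0 0 0) = (k.factorial : ℂ) • ∑ a ∈ Finset.range K, ∑ b ∈ Finset.range K,
      ∑ c ∈ Finset.range K, gco A k a b c • e a b c := by
  induction k with
  | zero =>
    simp only [Function.iterate_zero, id_eq, Nat.factorial_zero, Nat.cast_one, one_smul]
    rw [Finset.sum_eq_single_of_mem 0 (by simpa using hK), Finset.sum_eq_single_of_mem 0 (by simpa using hK),
      Finset.sum_eq_single_of_mem 0 (by simpa using hK)]
    · simp [gco, cchoose_zero]
    · intro b _ hb; simp [gco, hb]
    · intro b _ hb; simp [gco, hb]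
    · intro b _ hb; simp [gco, hb]
  | succ k ih =>
    rw [Function.iterate_succ_apply', ih, map_smul, Nat.factorial_succ]
    push_cast
    rw [mul_comm, mul_smul]
    congr 1
    simp only [map_sum, map_smul, hD, smul_add, Finset.sum_add_distrib, smul_smul]
    -- shift in `c`
    have s1 : ∀ a b, ∑ c ∈ Finset.range K, (gco A k a b c * ((A : ℂ) - 2 * a - c)) • e a b (c + 1)
        = ∑ c ∈ Finset.range K, (if c = 0 then 0 else
            gco A k a b (c - 1) * ((A : ℂ) - 2 * a - ((c - 1 : ℕ) : ℂ))) • e a b c := by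
      intro a b
      rw [← sum_shift K (fun c => (if c = 0 then 0 else
            gco A k a b (c - 1) * ((A : ℂ) - 2 * a - ((c - 1 : ℕ) : ℂ))) • e a b c)]
      · simp
      · simp
      · simp [hc a b K le_rfl]
    have s2 : ∑ a ∈ Finset.range K, ∑ b ∈ Finset.range K,
          ∑ c ∈ Finset.range K, gco A k a b c • e (a + 1) b c
        = ∑ a ∈ Finset.range K, ∑ b ∈ Finset.range K, ∑ c ∈ Finset.range K,
            (if a = 0 then 0 else gco A k (a - 1) b c) • e a b c := by
      rw [← sum_shift K (fun a => ∑ b ∈ Finset.range K, ∑ c ∈ Finset.range K,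
            (if a = 0 then 0 else gco A k (a - 1) b c) • e a b c)]
      · simp
      · simp
      · simp [ha K _ _ le_rfl]
    have s3 : ∀ a, ∑ b ∈ Finset.range K,
          ∑ c ∈ Finset.range K, gco A k a b c • e a (b + 1) c
        = ∑ b ∈ Finset.range K, ∑ c ∈ Finset.range K,
            (if b = 0 then 0 else gco A k a (b - 1) c) • e a b c := by
      intro a
      rw [← sum_shift K (fun b => ∑ c ∈ Finset.range K,
            (if b = 0 then 0 else gco A k a (b - 1) c) • e a b c)]
      · simp
      · simp
      · simp [hb _ K _ le_rfl]
    simp only [s1, s2, s3]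
    simp only [← Finset.sum_add_distrib, Finset.smul_sum, ← add_smul, smul_smul]
    refine Finset.sum_congr rfl fun a _ => Finset.sum_congr rfl fun b _ =>
      Finset.sum_congr rfl fun c _ => ?_
    congr 1
    rw [gco_rec]

/-! ### Vertex operator algebra preliminaries -/

/-- the `n`-th mode as a bilinear map -/
noncomputable def VOA.bl (V : VOA) (n : ℤ) : V.carrier →ₗ[ℂ] V.carrier →ₗ[ℂ] V.carrier :=
  LinearMap.mk₂ ℂ (fun u v => V.op u n v)
    (fun a b w => (V.op_linear_left n w).map_add a b)
    (fun c a w => (V.op_linear_left n w).map_smul c a)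
    (fun u a b => (V.op_linear_right u n).map_add a b)
    (fun c u a => (V.op_linear_right u n).map_smul c a)

/-- the `n`-th mode as a bilinear map -/
noncomputable def WeakModule.bl {V : VOA} (W : WeakModule V) (n : ℤ) :
    V.carrier →ₗ[ℂ] W.carrier →ₗ[ℂ] W.carrier :=
  LinearMap.mk₂ ℂ (fun u v => W.op u n v)
    (fun a b w => (W.op_linear_left n w).map_add a b)
    (fun c a w => (W.op_linear_left n w).map_smul c a)
    (fun u a b => (W.op_linear_right u n).map_add a b)
    (fun c u a => (W.op_linear_right u n).map_smul c a)

theorem VOA.op_eq (V : VOA) (u : V.carrier) (n : ℤ) (v : V.carrier) :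
    V.op u n v = V.bl n u v := rfl

theorem WeakModule.op_eq {V : VOA} (W : WeakModule V) (u : V.carrier) (n : ℤ) (v : W.carrier) :
    W.op u n v = W.bl n u v := rfl

/-- `L(1)` as a linear map -/
noncomputable def VOA.D (V : VOA) : V.carrier →ₗ[ℂ] V.carrier := V.bl 2 V.omega

theorem VOA.L_one_eq (V : VOA) : V.L 1 = V.D := rfl

theorem VOA.hom_induction (V : VOA) (P : V.carrier → Prop)
    (hom : ∀ (h : ℤ), ∀ v ∈ V.wtSpace h, P v) (hadd : ∀ x y, P x → P y → P (x + y))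
    (v : V.carrier) : P v := by
  rw [← V.proj_sum v]
  exact finsum_induction P (hom 0 0 (Submodule.zero_mem _)) hadd
    (fun i => hom i _ (V.proj_mem i v))

theorem VOA.D_mem (V : VOA) {p : ℤ} {v : V.carrier} (hv : v ∈ V.wtSpace p) :
    V.D v ∈ V.wtSpace (p - 1) := by
  have := V.op_wt 2 p 2 _ V.omega_wt v hv
  rwa [show (2 : ℤ) + p - 2 - 1 = p - 1 by ring] at this

theorem VOA.Dpow_mem (V : VOA) {p : ℤ} {v : V.carrier} (hv : v ∈ V.wtSpace p) (i : ℕ) :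
    (V.D^[i]) v ∈ V.wtSpace (p - i) := by
  induction i with
  | zero => simpa using hv
  | succ i ih =>
    rw [Function.iterate_succ_apply']
    have := V.D_mem ih
    rwa [show p - (i : ℤ) - 1 = p - (i + 1 : ℕ) by push_cast; ring] at this

theorem VOA.wt_zero (V : VOA) {N : ℤ} (hN : ∀ n : ℤ, n < N → V.wtSpace n = ⊥) {p : ℤ}
    (hp : p < N) {v : V.carrier} (hv : v ∈ V.wtSpace p) : v = 0 := by
  rw [hN p hp] at hv
  simpa using hv

theorem VOA.Dpow_zero (V : VOA) {N : ℤ} (hN : ∀ n : ℤ, n < N → V.wtSpace n = ⊥) {p : ℤ}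
    {v : V.carrier} (hv : v ∈ V.wtSpace p) (i : ℕ) (h : p - i < N) : (V.D^[i]) v = 0 :=
  V.wt_zero hN h (V.Dpow_mem hv i)

/-- `L(1)` is almost a derivation. -/
theorem VOA.D_op (V : VOA) {p : ℤ} {u : V.carrier} (hu : u ∈ V.wtSpace p) (v : V.carrier)
    (i : ℤ) : V.D (V.op u i v)
      = (2 * (p : ℂ) - i - 2) • V.op u (i + 1) v + V.op (V.D u) i v + V.op u i (V.D v) := by
  have h := V.borcherds V.omega u v 0 2 i
  rw [finsum_eq_sum_of_support_subset (s := Finset.range 3),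
    finsum_eq_sum_of_support_subset (s := Finset.range 1)] at h
  · simp only [Finset.sum_range_succ, Finset.sum_range_zero, cchoose_two, cchoose_zero] at h
    have h0 := V.L_neg_one u (i + 2) v
    have h1 := V.L_zero p u hu
    norm_num at h
    rw [h1, show (2 : ℤ) + i = i + 2 by ring, h0, show i + 2 - 1 = i + 1 by ring] at h
    simp only [VOA.op_eq, map_smul, LinearMap.smul_apply] at h ⊢
    rw [VOA.D]
    rw [eq_add_of_sub_eq h.symm]
    push_cast
    module
  · intro x hx
    by_contra hx'
    apply hx
    rcases x with _ | x
    · simp at hx'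
    · simp [cchoose_zero_succ]
  · intro x hx
    by_contra hx'
    apply hx
    simp only [Finset.coe_range, Set.mem_Iio, not_lt] at hx'
    simp [cchoose_two, Nat.choose_eq_zero_of_lt hx']

theorem VOA.e_zero (V : VOA) {N : ℤ} (hN : ∀ n : ℤ, n < N → V.wtSpace n = ⊥) {p q : ℤ}
    {u v : V.carrier} (hu : u ∈ V.wtSpace p) (hv : v ∈ V.wtSpace q) (a b : ℕ) (j : ℤ)
    (h : p + q - a - b - j - 1 < N) : V.op ((V.D^[a]) u) j ((V.D^[b]) v) = 0 := by
  apply V.wt_zero hN h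
  have := V.op_wt _ _ j _ (V.Dpow_mem hu a) _ (V.Dpow_mem hv b)
  rwa [show p - (a : ℤ) + (q - b) - j - 1 = p + q - a - b - j - 1 by ring] at this

theorem VOA.Dpow_op (V : VOA) {N : ℤ} (hN : ∀ n : ℤ, n < N → V.wtSpace n = ⊥) {p q : ℤ}
    {u v : V.carrier} (hu : u ∈ V.wtSpace p) (hv : v ∈ V.wtSpace q) (i : ℕ) (K : ℕ) (hK : 0 < K)
    (h1 : p - K < N) (h2 : q - K < N) (h3 : p + q - K - 1 < N) (k : ℕ) :
    (V.D^[k]) (V.op u i v) = (k.factorial : ℂ) • ∑ a ∈ Finset.range K, ∑ b ∈ Finset.range K,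
      ∑ c ∈ Finset.range K, gco (2 * p - i - 2) k a b c •
        V.op ((V.D^[a]) u) ((i + c : ℕ) : ℤ) ((V.D^[b]) v) := by
  have := leibniz_pow V.D (fun a b c => V.op ((V.D^[a]) u) ((i + c : ℕ) : ℤ) ((V.D^[b]) v))
    (2 * p - i - 2) K hK ?_ ?_ ?_ ?_ k
  · simpa using this
  · intro a b c h
    rw [V.Dpow_zero hN hu a (by omega), VOA.op_eq]; simp
  · intro a b c h
    rw [V.Dpow_zero hN hv b (by omega), VOA.op_eq]; simp
  · intro a b c h
    exact V.e_zero hN hu hv a b _ (by omega)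
  · intro a b c
    rw [V.D_op (V.Dpow_mem hu a), Function.iterate_succ_apply', Function.iterate_succ_apply']
    congr 2
    push_cast
    rw [add_assoc]
    congr 1
    ring

/-! ### Module preliminaries -/

theorem WeakModule.comm {V : VOA} (W : WeakModule V) (u v : V.carrier) (w : W.carrier)
    (m n : ℤ) (K : ℕ) (hK : ∀ j : ℕ, K ≤ j → V.op u j v = 0) :
    W.op u m (W.op v n w) - W.op v n (W.op u m w)
      = ∑ j ∈ Finset.range K, cchoose m j • W.op (V.op u (j : ℤ) v) (m + n - j) w := by
  have h := W.borcherds u v w 0 m n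
  rw [finsum_eq_sum_of_support_subset (s := Finset.range K),
    finsum_eq_sum_of_support_subset (s := Finset.range 1)] at h
  · simp only [zero_add] at h
    rw [h]
    simp [cchoose_zero]
  · intro x hx
    by_contra hx'
    apply hx
    rcases x with _ | x
    · simp at hx'
    · simp [cchoose_zero_succ]
  · intro x hx
    by_contra hx'
    apply hx
    simp only [Finset.coe_range, Set.mem_Iio, not_lt] at hx'
    simp only [zero_add]
    rw [hK x hx', W.op_eq]
    simp

theorem VOA.Lm1_eq (V : VOA) (v : V.carrier) : V.op V.omega 0 v = V.op v (-2) V.one := by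
  have h := V.L_neg_one v (-1) V.one
  rw [V.create] at h
  rw [h]
  norm_num

theorem WeakModule.Lm1 {V : VOA} (W : WeakModule V) (v : V.carrier) (n : ℤ) (w : W.carrier) :
    W.op (V.op V.omega 0 v) n w = (-(n : ℂ)) • W.op v (n - 1) w := by
  have h := W.borcherds v V.one w (-2) 0 n
  rw [finsum_eq_single _ 0] at h
  swap
  · intro i hi
    obtain ⟨i, rfl⟩ := Nat.exists_eq_succ_of_ne_zero hi
    simp [cchoose_zero_succ]
  rw [V.Lm1_eq]
  simp only [cchoose_neg_two, W.one_op, cchoose_zero, one_smul, Nat.cast_zero, add_zero, sub_zero,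
    zero_add] at h
  rw [h]
  have z : ∀ k, W.op v k 0 = 0 := fun k => by rw [W.op_eq]; simp
  rcases lt_trichotomy n 0 with hn | hn | hn
  · obtain ⟨i, hi⟩ : ∃ i : ℕ, n = -1 - i := ⟨(-1 - n).toNat, by omega⟩
    rw [finsum_eq_single _ i]
    · rw [if_pos (by omega), if_neg (by omega)]
      rw [show (-2 : ℤ) - i = n - 1 by omega, hi]
      push_cast
      simp only [smul_zero, sub_zero]
      congr 1
      ring
    · intro j hj
      rw [if_neg (by omega), if_neg (by omega), z]
      simp
  · subst hn
    rw [finsum_eq_zero_of_forall_eq_zero]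
    · simp
    · intro j
      rw [if_neg (by omega), if_neg (by omega), z]
      simp
  · obtain ⟨i, hi⟩ : ∃ i : ℕ, n = 1 + i := ⟨(n - 1).toNat, by omega⟩
    rw [finsum_eq_single _ i]
    · rw [if_neg (by omega), if_pos (by omega), z]
      rw [show n - 1 = (i : ℤ) by omega, hi]
      norm_num
      rw [← neg_smul]
      congr 1
      ring
    · intro j hj
      rw [if_neg (by omega), if_neg (by omega), z]
      simp

theorem VOA.D_Lm1 (V : VOA) {p : ℤ} {v : V.carrier} (hv : v ∈ V.wtSpace p) :
    V.D (V.op V.omega 0 v) = V.op V.omega 0 (V.D v) + (2 * (p : ℂ)) • v := by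
  have h := V.virasoro 1 (-1) v
  norm_num at h
  rw [V.L_zero p v hv, smul_smul] at h
  exact (sub_eq_iff_eq_add'.mp h)

theorem VOA.Lm1_mem (V : VOA) {p : ℤ} {v : V.carrier} (hv : v ∈ V.wtSpace p) :
    V.op V.omega 0 v ∈ V.wtSpace (p + 1) := by
  have := V.op_wt 2 p 0 _ V.omega_wt v hv
  rwa [show (2 : ℤ) + p - 0 - 1 = p + 1 by ring] at this

theorem VOA.Dpow_Lm1 (V : VOA) {p : ℤ} {v : V.carrier} (hv : v ∈ V.wtSpace p) (k : ℕ) :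
    (V.D^[k]) (V.op V.omega 0 v) = V.op V.omega 0 ((V.D^[k]) v)
      + ((k : ℂ) * (2 * p - k + 1)) • (V.D^[k - 1]) v := by
  induction k with
  | zero => simp
  | succ k ih =>
    rw [Function.iterate_succ_apply', ih, map_add, V.D_Lm1 (V.Dpow_mem hv k), map_smul,
      Function.iterate_succ_apply']
    rcases k with _ | k
    · simp
    · simp only [Nat.add_sub_cancel, ← Function.iterate_succ_apply' V.D]
      push_cast
      module


/-! ### The adjoint modes -/

/-- the adjoint mode of a homogeneous vector, as an operator on `W` -/
noncomputable def WeakModule.T {V : VOA} (W : WeakModule V) (h : ℤ) (v : V.carrier) (n : ℤ)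
    (K : ℕ) : W.carrier →ₗ[ℂ] W.carrier :=
  ∑ i ∈ Finset.range K, ((-1 : ℂ) ^ h / (i.factorial : ℂ)) •
    W.bl (2 * h - n - (i : ℤ) - 2) ((V.D^[i]) v)

theorem VOA.Dpow_map_zero (V : VOA) (i : ℕ) : (V.D^[i]) 0 = 0 :=
  Function.iterate_fixed (map_zero V.D) i

theorem VOA.proj_zero (V : VOA) (h : ℤ) : V.proj h 0 = 0 := (V.proj_linear h).map_zero

section
variable {V : VOA} (W : WeakModule V)

theorem WeakModule.inner_zero {α : W.carrier → ℂ} (hα : IsLinearMap ℂ α) (c : ℂ) (i : ℕ) (n : ℤ)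
    (w : W.carrier) : c * α (W.op ((V.L 1)^[i] 0) n w) = 0 := by
  rw [VOA.L_one_eq, VOA.Dpow_map_zero, W.op_eq, map_zero, LinearMap.zero_apply, hα.map_zero,
    mul_zero]

theorem WeakModule.inner_support {α : W.carrier → ℂ} (hα : IsLinearMap ℂ α) {N : ℤ}
    (hN : ∀ n : ℤ, n < N → V.wtSpace n = ⊥) {h : ℤ} {v : V.carrier} (hv : v ∈ V.wtSpace h)
    (n : ℤ) (w : W.carrier) (K : ℕ) (hK : h - K < N) :
    (Function.support fun i : ℕ => ((-1 : ℂ) ^ h / (Nat.factorial i : ℂ)) *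
      α (W.op ((V.L 1)^[i] v) (2 * h - n - (i : ℤ) - 2) w)) ⊆ Finset.range K := by
  intro i hi
  by_contra hi'
  apply hi
  simp only [Finset.coe_range, Set.mem_Iio, not_lt] at hi'
  beta_reduce
  rw [VOA.L_one_eq, V.Dpow_zero hN hv i (by omega), W.op_eq, map_zero, LinearMap.zero_apply,
    hα.map_zero, mul_zero]

theorem WeakModule.dmode_hom {α : W.carrier → ℂ} (hα : IsLinearMap ℂ α) {N : ℤ}
    (hN : ∀ n : ℤ, n < N → V.wtSpace n = ⊥) {h : ℤ} {v : V.carrier} (hv : v ∈ V.wtSpace h)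
    (n : ℤ) (w : W.carrier) (K : ℕ) (hK : h - K < N) :
    W.dmode v n α w = α (W.T h v n K w) := by
  unfold WeakModule.dmode
  rw [finsum_eq_single _ h]
  · rw [V.proj_eq h v hv, finsum_eq_sum_of_support_subset _ (W.inner_support hα hN hv n w K hK)]
    change _ = hα.mk' _ _
    rw [WeakModule.T]
    simp only [LinearMap.sum_apply, LinearMap.smul_apply, map_sum, map_smul, smul_eq_mul]
    rfl
  · intro h' hh
    apply finsum_eq_zero_of_forall_eq_zero
    intro i
    rw [V.proj_ne h h' hh.symm v hv]
    exact W.inner_zero hα _ _ _ _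

theorem WeakModule.dmode_add {α : W.carrier → ℂ} (hα : IsLinearMap ℂ α) (x y : V.carrier)
    (n : ℤ) (w : W.carrier) : W.dmode (x + y) n α w = W.dmode x n α w + W.dmode y n α w := by
  obtain ⟨N, hN⟩ := V.lower_trunc
  have fin_out : ∀ x : V.carrier, (Function.support fun h : ℤ => ∑ᶠ i : ℕ,
      ((-1 : ℂ) ^ h / (Nat.factorial i : ℂ)) *
        α (W.op ((V.L 1)^[i] (V.proj h x)) (2 * h - n - (i : ℤ) - 2) w)).Finite := by
    intro x
    refine (V.proj_finite x).subset ?_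
    intro h hh hx
    apply hh
    apply finsum_eq_zero_of_forall_eq_zero
    intro i
    simp only at hx
    rw [hx]
    exact W.inner_zero hα _ _ _ _
  unfold WeakModule.dmode
  rw [← finsum_add_distrib (fin_out x) (fin_out y)]
  refine finsum_congr fun h => ?_
  have fin_in : ∀ x : V.carrier, (Function.support fun i : ℕ =>
      ((-1 : ℂ) ^ h / (Nat.factorial i : ℂ)) *
        α (W.op ((V.L 1)^[i] (V.proj h x)) (2 * h - n - (i : ℤ) - 2) w)).Finite := by
    intro x
    exact (Finset.finite_toSet _).subset (W.inner_support hα hN (V.proj_mem h x) n w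
      (h - N + 1).toNat (by omega))
  rw [← finsum_add_distrib (fin_in x) (fin_in y)]
  refine finsum_congr fun i => ?_
  rw [(V.proj_linear h).map_add, VOA.L_one_eq, iterate_map_add, W.op_eq, map_add,
    LinearMap.add_apply, hα.map_add, mul_add]
  rfl

theorem WeakModule.dmode_linear {α : W.carrier → ℂ} (hα : IsLinearMap ℂ α) (v : V.carrier)
    (n : ℤ) : IsLinearMap ℂ (W.dmode v n α) := by
  obtain ⟨N, hN⟩ := V.lower_trunc
  refine V.hom_induction (fun v => IsLinearMap ℂ (W.dmode v n α)) ?_ ?_ v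
  · intro h v hv
    have e : W.dmode v n α = fun w => α (W.T h v n (h - N + 1).toNat w) :=
      funext fun w => W.dmode_hom hα hN hv n w _ (by omega)
    rw [e]
    exact ((hα.mk' _).comp (W.T h v n (h - N + 1).toNat)).isLinear
  · intro x y hx hy
    have e : W.dmode (x + y) n α = fun w => W.dmode x n α w + W.dmode y n α w :=
      funext fun w => W.dmode_add hα x y n w
    rw [e]
    exact ((hx.mk' _) + (hy.mk' _)).isLinear

theorem WeakModule.dmode_alpha_add {α β : W.carrier → ℂ} (hα : IsLinearMap ℂ α)
    (hβ : IsLinearMap ℂ β) (v : V.carrier) (n : ℤ) (w : W.carrier) :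
    W.dmode v n (fun w => α w + β w) w = W.dmode v n α w + W.dmode v n β w := by
  have hab : IsLinearMap ℂ (fun w => α w + β w) := (hα.mk' _ + hβ.mk' _).isLinear
  obtain ⟨N, hN⟩ := V.lower_trunc
  refine V.hom_induction (fun v => W.dmode v n (fun w => α w + β w) w
    = W.dmode v n α w + W.dmode v n β w) ?_ ?_ v
  · intro h v hv
    rw [W.dmode_hom hα hN hv n w (h - N + 1).toNat (by omega),
      W.dmode_hom hβ hN hv n w (h - N + 1).toNat (by omega),
      W.dmode_hom hab hN hv n w (h - N + 1).toNat (by omega)]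
  · intro x y hx hy
    rw [W.dmode_add hab, W.dmode_add hα, W.dmode_add hβ, hx, hy]
    ring

theorem WeakModule.dmode_zero {α : W.carrier → ℂ} (hα : IsLinearMap ℂ α) (n : ℤ)
    (w : W.carrier) : W.dmode 0 n α w = 0 := by
  have := W.dmode_add hα 0 0 n w
  rw [add_zero] at this
  exact left_eq_add.mp this

/-- The derivative property on homogeneous vectors. -/
theorem WeakModule.T_Lm1 {N : ℤ}
    (hN : ∀ n : ℤ, n < N → V.wtSpace n = ⊥) {p : ℤ} {v : V.carrier} (hv : v ∈ V.wtSpace p)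
    (n : ℤ) (w : W.carrier) (K : ℕ) (hK : p - K < N) :
    W.T (p + 1) (V.op V.omega 0 v) n (K + 1) w = (-(n : ℂ)) • W.T p v (n - 1) K w := by
  simp only [WeakModule.T, LinearMap.sum_apply, LinearMap.smul_apply]
  have hs : (-1 : ℂ) ^ (p + 1) = -(-1 : ℂ) ^ p := by
    rw [zpow_add_one₀ (by norm_num)]; ring
  have e1 : ∀ k : ℕ, W.bl (2 * (p + 1) - n - k - 2) ((V.D^[k]) (V.op V.omega 0 v)) w
      = (-(2 * (p : ℂ) - n - k)) • W.bl (2 * p - n - k - 1) ((V.D^[k]) v) w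
        + ((k : ℂ) * (2 * p - k + 1)) • W.bl (2 * p - n - k) ((V.D^[k - 1]) v) w := by
    intro k
    rw [V.Dpow_Lm1 hv, map_add, map_smul, LinearMap.add_apply, LinearMap.smul_apply,
      ← W.op_eq, W.Lm1, show 2 * (p + 1) - n - (k : ℤ) - 2 = 2 * p - n - k by ring]
    push_cast
    rfl
  simp only [e1, smul_add, Finset.sum_add_distrib]
  rw [Finset.sum_range_succ, V.Dpow_zero hN hv K hK, Finset.sum_range_succ']
  simp only [map_zero, LinearMap.zero_apply, smul_zero, add_zero, Nat.cast_zero, zero_mul,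
    zero_smul, Nat.add_sub_cancel]
  rw [← Finset.sum_add_distrib, Finset.smul_sum]
  refine Finset.sum_congr rfl fun k _ => ?_
  rw [show 2 * p - n - ((k + 1 : ℕ) : ℤ) = 2 * p - n - k - 1 by push_cast; ring,
    show 2 * p - (n - 1) - (k : ℤ) - 2 = 2 * p - n - k - 1 by ring]
  simp only [smul_smul, ← add_smul]
  congr 1
  rw [hs, Nat.factorial_succ]
  have h1 : (k.factorial : ℂ) ≠ 0 := by exact_mod_cast Nat.factorial_ne_zero k
  have h2 : (k : ℂ) + 1 ≠ 0 := by exact_mod_cast Nat.succ_ne_zero k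
  push_cast
  field_simp
  ring

theorem WeakModule.T_T (p q : ℤ) (u v : V.carrier) (m n : ℤ) (K : ℕ) (w : W.carrier) :
    W.T p u m K (W.T q v n K w) = ∑ a ∈ Finset.range K, ∑ b ∈ Finset.range K,
      ((-1 : ℂ) ^ p / (a.factorial : ℂ)) • ((-1 : ℂ) ^ q / (b.factorial : ℂ)) •
        W.bl (2 * p - m - (a : ℤ) - 2) ((V.D^[a]) u)
          (W.bl (2 * q - n - (b : ℤ) - 2) ((V.D^[b]) v) w) := by
  rw [WeakModule.T, LinearMap.sum_apply]
  refine Finset.sum_congr rfl fun a _ => ?_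
  rw [WeakModule.T, LinearMap.sum_apply, map_sum]
  refine Finset.sum_congr rfl fun b _ => ?_
  rw [LinearMap.smul_apply, LinearMap.smul_apply, map_smul]

/-- The commutator formula on homogeneous vectors. -/
theorem WeakModule.T_comm {N : ℤ}
    (hN : ∀ n : ℤ, n < N → V.wtSpace n = ⊥) {p q : ℤ} {u v : V.carrier} (hu : u ∈ V.wtSpace p)
    (hv : v ∈ V.wtSpace q) (m n : ℤ) (w : W.carrier) (K : ℕ) (hK : 0 < K)
    (h1 : p - K < N) (h2 : q - K < N) (h3 : p + q - K - 1 < N) :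
    W.T q v n K (W.T p u m K w) - W.T p u m K (W.T q v n K w)
      = ∑ i ∈ Finset.range K, cchoose m i •
          W.T (p + q - i - 1) (V.op u i v) (m + n - i) (3 * K) w := by
  set Z : ℕ → ℕ → ℕ → W.carrier := fun a b j =>
    W.op (V.op ((V.D^[a]) u) (j : ℤ) ((V.D^[b]) v)) (2 * p + 2 * q - m - n - a - b - j - 4) w
    with hZ
  have Zz : ∀ a b j, K ≤ j → Z a b j = 0 := by
    intro a b j hj
    simp only [hZ]
    rw [V.e_zero hN hu hv a b _ (by omega), W.op_eq, map_zero, LinearMap.zero_apply]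
  have lhs : W.T q v n K (W.T p u m K w) - W.T p u m K (W.T q v n K w)
      = ∑ a ∈ Finset.range K, ∑ b ∈ Finset.range K, ∑ j ∈ Finset.range K,
          (-((-1 : ℂ) ^ p / a.factorial * ((-1 : ℂ) ^ q / b.factorial))
            * cchoose (2 * p - m - a - 2) j) • Z a b j := by
    rw [W.T_T, W.T_T, Finset.sum_comm, ← Finset.sum_sub_distrib]
    refine Finset.sum_congr rfl fun a _ => ?_
    rw [← Finset.sum_sub_distrib]
    refine Finset.sum_congr rfl fun b _ => ?_
    have c := W.comm ((V.D^[a]) u) ((V.D^[b]) v) w (2 * p - m - a - 2) (2 * q - n - b - 2) K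
      (fun j hj => V.e_zero hN hu hv a b _ (by omega))
    simp only [mul_smul, ← Finset.smul_sum]
    have c2 : ∑ j ∈ Finset.range K, cchoose (2 * p - m - a - 2) j • Z a b j
        = W.op ((V.D^[a]) u) (2 * p - m - a - 2) (W.op ((V.D^[b]) v) (2 * q - n - b - 2) w)
          - W.op ((V.D^[b]) v) (2 * q - n - b - 2)
            (W.op ((V.D^[a]) u) (2 * p - m - a - 2) w) := by
      rw [c]
      refine Finset.sum_congr rfl fun j _ => ?_
      simp only [hZ]
      rw [show 2 * p + 2 * q - m - n - a - b - j - 4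
        = 2 * p - m - a - 2 + (2 * q - n - b - 2) - (j : ℤ) by ring]
    rw [c2]
    simp only [W.op_eq]
    module
  have rhs : ∀ i : ℕ, W.T (p + q - i - 1) (V.op u i v) (m + n - i) (3 * K) w
      = ∑ a ∈ Finset.range K, ∑ b ∈ Finset.range K, ∑ c ∈ Finset.range K,
          (-((-1 : ℂ) ^ p * (-1 : ℂ) ^ q * (-1) ^ i) *
            (cchoose (2 * p - i - 2 - a) c / (a.factorial * b.factorial))) • Z a b (i + c) := by
    intro i
    have hs : (-1 : ℂ) ^ (p + q - i - 1) = -((-1 : ℂ) ^ p * (-1 : ℂ) ^ q * (-1) ^ i) := by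
      have : (-1 : ℂ) ≠ 0 := by norm_num
      rw [zpow_sub_one₀ this, zpow_sub₀ this, zpow_add₀ this, zpow_natCast]
      rcases neg_one_pow_eq_or ℂ i with h | h <;> rw [h] <;> ring
    have step : ∀ k : ℕ, ((-1 : ℂ) ^ (p + q - i - 1) / (k.factorial : ℂ)) •
        W.bl (2 * (p + q - i - 1) - (m + n - i) - k - 2) ((V.D^[k]) (V.op u i v)) w
        = ∑ a ∈ Finset.range K, ∑ b ∈ Finset.range K, ∑ c ∈ Finset.range K,
          (if a + b + c = k then (-((-1 : ℂ) ^ p * (-1 : ℂ) ^ q * (-1) ^ i) *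
            (cchoose (2 * p - i - 2 - a) c / (a.factorial * b.factorial))) • Z a b (i + c)
            else 0) := by
      intro k
      rw [V.Dpow_op hN hu hv i K hK h1 h2 h3 k, hs]
      have hk : (k.factorial : ℂ) ≠ 0 := by exact_mod_cast Nat.factorial_ne_zero k
      rw [map_smul, LinearMap.smul_apply, smul_smul, div_mul_cancel₀ _ hk]
      simp only [map_sum, map_smul, LinearMap.sum_apply, LinearMap.smul_apply, Finset.smul_sum]
      refine Finset.sum_congr rfl fun a _ => Finset.sum_congr rfl fun b _ =>
        Finset.sum_congr rfl fun c _ => ?_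
      by_cases hk : a + b + c = k
      · rw [if_pos hk, gco, if_pos hk, smul_smul]
        congr 1
        simp only [hZ, W.op_eq]
        congr 3
        rw [← hk]
        push_cast
        ring
      · rw [if_neg hk, gco, if_neg hk, zero_smul, smul_zero]
    simp only [WeakModule.T, LinearMap.sum_apply, LinearMap.smul_apply, step]
    rw [Finset.sum_comm]
    refine Finset.sum_congr rfl fun a ha => ?_
    rw [Finset.sum_comm]
    refine Finset.sum_congr rfl fun b hb => ?_
    rw [Finset.sum_comm]
    refine Finset.sum_congr rfl fun c hc => ?_
    rw [Finset.sum_ite_eq, if_pos]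
    simp only [Finset.mem_range] at *
    omega
  rw [lhs]
  simp only [rhs, Finset.smul_sum, smul_smul]
  symm
  rw [Finset.sum_comm]
  refine Finset.sum_congr rfl fun a _ => ?_
  rw [Finset.sum_comm]
  refine Finset.sum_congr rfl fun b _ => ?_
  rw [sum_diag K (fun i c => cchoose m i * (-((-1 : ℂ) ^ p * (-1 : ℂ) ^ q * (-1) ^ i) *
            (cchoose (2 * p - i - 2 - a) c / (a.factorial * b.factorial)))) (Z a b) (Zz a b)]
  refine Finset.sum_congr rfl fun j _ => ?_
  congr 1
  rw [show 2 * p - m - a - 2 = (2 * p - 2 - a) - m by ring,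
    ← cchoose_vandermonde, Finset.mul_sum]
  refine Finset.sum_congr rfl fun i _ => ?_
  rw [show 2 * p - i - 2 - a = 2 * p - 2 - a - (i : ℤ) by ring]
  ring

theorem WeakModule.comm_hom {α : W.carrier → ℂ} (hα : IsLinearMap ℂ α) {p q : ℤ}
    {u v : V.carrier} (hu : u ∈ V.wtSpace p) (hv : v ∈ V.wtSpace q) (m n : ℤ) (w : W.carrier) :
    W.dmode u m (W.dmode v n α) w - W.dmode v n (W.dmode u m α) w
      = ∑ᶠ i : ℕ, cchoose m i * W.dmode (V.op u (i : ℤ) v) (m + n - (i : ℤ)) α w := by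
  obtain ⟨N, hN⟩ := V.lower_trunc
  obtain ⟨K, hK, h1, h2, h3⟩ : ∃ K : ℕ, 0 < K ∧ p - K < N ∧ q - K < N ∧ p + q - K - 1 < N :=
    ⟨(p - N).toNat + (q - N).toNat + (p + q - N).toNat + 1, by omega, by omega, by omega,
      by omega⟩
  rw [W.dmode_hom (W.dmode_linear hα v n) hN hu m w K h1,
    W.dmode_hom (W.dmode_linear hα u m) hN hv n w K h2,
    W.dmode_hom hα hN hv n _ K h2, W.dmode_hom hα hN hu m _ K h1, ← hα.map_sub,
    W.T_comm hN hu hv m n w K hK h1 h2 h3]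
  rw [finsum_eq_sum_of_support_subset (s := Finset.range K)]
  · change hα.mk' _ _ = _
    rw [map_sum]
    refine Finset.sum_congr rfl fun i _ => ?_
    have hm : V.op u i v ∈ V.wtSpace (p + q - i - 1) := V.op_wt p q i u hu v hv
    rw [map_smul, smul_eq_mul, W.dmode_hom hα hN hm _ w (3 * K) (by push_cast; omega)]
    rfl
  · intro i hi
    by_contra hi'
    apply hi
    simp only [Finset.coe_range, Set.mem_Iio, not_lt] at hi'
    have := V.wt_zero hN (by omega) (V.op_wt p q i u hu v hv)
    simp only
    rw [this, W.dmode_zero hα, mul_zero]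

theorem WeakModule.rhs_finite {α : W.carrier → ℂ} (hα : IsLinearMap ℂ α)
    (u v : V.carrier) (m n : ℤ) (w : W.carrier) :
    (Function.support fun i : ℕ =>
      cchoose m i * W.dmode (V.op u (i : ℤ) v) (m + n - (i : ℤ)) α w).Finite := by
  obtain ⟨M, hM⟩ := V.trunc u v
  refine (Finset.finite_toSet (Finset.range M.toNat)).subset ?_
  intro i hi
  by_contra hi'
  apply hi
  simp only [Finset.coe_range, Set.mem_Iio, not_lt] at hi'
  simp only
  rw [hM i (by omega), W.dmode_zero hα, mul_zero]

end

/-- For a VOA `V` and a weak `V`-module `W`, the adjoint vertex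
operators `Y*(v,x) = Σₙ v*ₙ x^{-n-1}` on the full dual `W*` satisfy the opposite-Jacobi
commutator formula `[Y*(u,x₁), Y*(v,x₂)] = Res_{x₀} x₂⁻¹ δ((x₁-x₀)/x₂) Y*(Y(u,x₀)v, x₂)`,
i.e. in components `[u*ₘ, v*ₙ] = Σ_{i≥0} C(m,i) (uᵢv)*_{m+n-i}`, together with the
`L(-1)`-derivative property `Y*(L(-1)v, x) = (d/dx) Y*(v,x)`, i.e.
`(L(-1)v)*ₙ = -n v*_{n-1}`. -/
theorem adjoint_operators_commutator_and_derivative (V : VOA) (W : WeakModule V) :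
    (∀ α : W.carrier → ℂ, IsLinearMap ℂ α →
      ∀ (u v : V.carrier) (m n : ℤ) (w : W.carrier),
        W.dmode u m (W.dmode v n α) w - W.dmode v n (W.dmode u m α) w
          = ∑ᶠ i : ℕ, cchoose m i * W.dmode (V.op u (i : ℤ) v) (m + n - (i : ℤ)) α w) ∧
    (∀ α : W.carrier → ℂ, IsLinearMap ℂ α →
      ∀ (v : V.carrier) (n : ℤ) (w : W.carrier),
        W.dmode (V.op V.omega 0 v) n α w = (-(n : ℂ)) * W.dmode v (n - 1) α w) := by
  constructor
  · intro α hα u v m n w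
    refine V.hom_induction (fun u => W.dmode u m (W.dmode v n α) w - W.dmode v n (W.dmode u m α) w
      = ∑ᶠ i : ℕ, cchoose m i * W.dmode (V.op u (i : ℤ) v) (m + n - (i : ℤ)) α w) ?_ ?_ u
    · intro p u hu
      refine V.hom_induction (fun v => W.dmode u m (W.dmode v n α) w
        - W.dmode v n (W.dmode u m α) w
        = ∑ᶠ i : ℕ, cchoose m i * W.dmode (V.op u (i : ℤ) v) (m + n - (i : ℤ)) α w) ?_ ?_ v
      · intro q v hv
        exact W.comm_hom hα hu hv m n w
      · intro x y hx hy
        have e : W.dmode (x + y) n α = fun w => W.dmode x n α w + W.dmode y n α w :=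
          funext fun w => W.dmode_add hα x y n w
        rw [e, W.dmode_alpha_add (W.dmode_linear hα x n) (W.dmode_linear hα y n),
          W.dmode_add (W.dmode_linear hα u m)]
        have r : ∀ i : ℕ, cchoose m i * W.dmode (V.op u (i : ℤ) (x + y)) (m + n - (i : ℤ)) α w
            = cchoose m i * W.dmode (V.op u (i : ℤ) x) (m + n - (i : ℤ)) α w
              + cchoose m i * W.dmode (V.op u (i : ℤ) y) (m + n - (i : ℤ)) α w := by
          intro i
          rw [(V.op_linear_right u i).map_add, W.dmode_add hα, mul_add]
        rw [finsum_congr r, finsum_add_distrib (W.rhs_finite hα u x m n w)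
          (W.rhs_finite hα u y m n w), ← hx, ← hy]
        ring
    · intro x y hx hy
      have e : W.dmode (x + y) m α = fun w => W.dmode x m α w + W.dmode y m α w :=
        funext fun w => W.dmode_add hα x y m w
      rw [e, W.dmode_alpha_add (W.dmode_linear hα x m) (W.dmode_linear hα y m),
        W.dmode_add (W.dmode_linear hα v n)]
      have r : ∀ i : ℕ, cchoose m i * W.dmode (V.op (x + y) (i : ℤ) v) (m + n - (i : ℤ)) α w
          = cchoose m i * W.dmode (V.op x (i : ℤ) v) (m + n - (i : ℤ)) α w
            + cchoose m i * W.dmode (V.op y (i : ℤ) v) (m + n - (i : ℤ)) α w := by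
        intro i
        rw [(V.op_linear_left i v).map_add, W.dmode_add hα, mul_add]
      rw [finsum_congr r, finsum_add_distrib (W.rhs_finite hα x v m n w)
        (W.rhs_finite hα y v m n w), ← hx, ← hy]
      ring
  · intro α hα v n w
    obtain ⟨N, hN⟩ := V.lower_trunc
    refine V.hom_induction (fun v => W.dmode (V.op V.omega 0 v) n α w
      = (-(n : ℂ)) * W.dmode v (n - 1) α w) ?_ ?_ v
    · intro p v hv
      obtain ⟨K, hK⟩ : ∃ K : ℕ, p - K < N := ⟨(p - N + 1).toNat, by omega⟩
      rw [W.dmode_hom hα hN (V.Lm1_mem hv) n w (K + 1) (by push_cast; omega),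
        W.dmode_hom hα hN hv (n - 1) w K hK, W.T_Lm1 hN hv n w K hK, hα.map_smul, smul_eq_mul]
    · intro x y hx hy
      rw [(V.op_linear_right V.omega 0).map_add, W.dmode_add hα, W.dmode_add hα, hx, hy]
      ring
end

section
/- Let V be a vertex operator algebra, W a weak V-module, and α ∈ W*. Then α ∈ D(W) if and only if for every v ∈ V there exists k ∈ ℤ such that v_m W ⊆ ker α for all m ≤ k; equivalently, if and only if for every v ∈ V there exists r ∈ ℤ such that x^r ⟨α, Y(v,x)w⟩ ∈ ℂ[x^{−1}] for all w ∈ W. -/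
namespace DWProof

open Filter

variable {V : VOA} (W : WeakModule V) (α : W.carrier → ℂ)

/-- `α` kills `v_m W` for all sufficiently negative `m`. -/
def P (v : V.carrier) : Prop := ∀ᶠ m : ℤ in atBot, ∀ w : W.carrier, α (W.op v m w) = 0

theorem P_iff (v : V.carrier) : P W α v ↔
    ∃ k : ℤ, ∀ m : ℤ, m ≤ k → ∀ w : W.carrier, α (W.op v m w) = 0 := by
  unfold P; rw [eventually_atBot]

theorem P_zero (hα : IsLinearMap ℂ α) : P W α 0 := by
  refine Eventually.of_forall fun m w => ?_
  have h : W.op 0 m w = 0 := (W.op_linear_left m w).map_zero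
  rw [h, hα.map_zero]

theorem P_add (hα : IsLinearMap ℂ α) {u v : V.carrier} (hu : P W α u) (hv : P W α v) :
    P W α (u + v) := by
  filter_upwards [hu, hv] with m h1 h2 w
  have h : W.op (u + v) m w = W.op u m w + W.op v m w := (W.op_linear_left m w).map_add u v
  rw [h, hα.map_add, h1, h2, add_zero]

theorem L1_zero : V.L 1 0 = 0 := (V.op_linear_right V.omega (1 + 1)).map_zero

theorem L1_iter_zero (i : ℕ) : (V.L 1)^[i] 0 = 0 := by
  induction i with
  | zero => rfl
  | succ k ih => rw [Function.iterate_succ_apply, L1_zero, ih]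

theorem L1_iter_mem (h : ℤ) (v : V.carrier) (hv : v ∈ V.wtSpace h) (i : ℕ) :
    (V.L 1)^[i] v ∈ V.wtSpace (h - i) := by
  induction i with
  | zero => simpa using hv
  | succ k ih =>
    rw [Function.iterate_succ_apply']
    have := V.op_wt 2 (h - k) (1 + 1) V.omega V.omega_wt _ ih
    have e : (2 : ℤ) + (h - k) - (1 + 1) - 1 = h - ((k + 1 : ℕ) : ℤ) := by push_cast; ring
    rw [e] at this
    exact this

theorem L1_iter_bound (h : ℤ) : ∃ B : ℕ, ∀ v ∈ V.wtSpace h, ∀ i : ℕ, B ≤ i →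
    (V.L 1)^[i] v = 0 := by
  obtain ⟨N, hN⟩ := V.lower_trunc
  refine ⟨(h - N + 1).toNat, fun v hv i hi => ?_⟩
  have := L1_iter_mem h v hv i
  rw [hN _ (by omega)] at this
  simpa using this

theorem tend (h : ℤ) (i : ℕ) :
    Tendsto (fun n : ℤ => 2 * h - n - (i : ℤ) - 2) atTop atBot := by
  refine tendsto_atBot.2 fun b => ?_
  filter_upwards [eventually_ge_atTop (2 * h - i - 2 - b)] with n hn
  omega

theorem term_zero (hα : IsLinearMap ℂ α) {u : V.carrier} (hu : u = 0) (m : ℤ) (w : W.carrier) :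
    α (W.op u m w) = 0 := by
  have h : W.op 0 m w = 0 := (W.op_linear_left m w).map_zero
  rw [hu, h, hα.map_zero]

/-- Shifted form of `P` at `L(1)^i v`. -/
theorem P.shift {u : V.carrier} (hu : P W α u) (h : ℤ) (i : ℕ) :
    ∀ᶠ n : ℤ in atTop, ∀ w : W.carrier, α (W.op u (2 * h - n - (i : ℤ) - 2) w) = 0 :=
  (tend h i).eventually hu

theorem backward (hα : IsLinearMap ℂ α) (H : ∀ v, P W α v) : α ∈ W.DW := by
  refine ⟨hα, fun v => ?_⟩
  rw [← eventually_atTop (p := fun n => ∀ w : W.carrier, W.dmode v n α w = 0)]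
  have key : ∀ h ∈ Function.support (fun n => V.proj n v), ∀ᶠ n : ℤ in atTop,
      ∀ (i : ℕ) (w : W.carrier),
        α (W.op ((V.L 1)^[i] (V.proj h v)) (2 * h - n - (i : ℤ) - 2) w) = 0 := by
    intro h _
    obtain ⟨B, hB⟩ := L1_iter_bound (V := V) h
    have : ∀ᶠ n : ℤ in atTop, ∀ i ∈ Finset.range B, ∀ w : W.carrier,
        α (W.op ((V.L 1)^[i] (V.proj h v)) (2 * h - n - (i : ℤ) - 2) w) = 0 :=
      (Filter.eventually_all_finset _).2 fun i _ => P.shift W α (H _) h i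
    filter_upwards [this] with n hn i w
    by_cases hi : i < B
    · exact hn i (Finset.mem_range.2 hi) w
    · exact term_zero W α hα (hB _ (V.proj_mem h v) i (not_lt.1 hi)) _ _
  filter_upwards [(Filter.eventually_all_finite (V.proj_finite v)).2 key] with n hn w
  unfold WeakModule.dmode
  refine finsum_eq_zero_of_forall_eq_zero fun h => finsum_eq_zero_of_forall_eq_zero fun i => ?_
  by_cases hh : V.proj h v = 0
  · rw [term_zero W α hα (by rw [hh, L1_iter_zero]), mul_zero]
  · rw [hn h hh i w, mul_zero]

theorem dmode_hom (hα : IsLinearMap ℂ α) (h : ℤ) (v : V.carrier) (hv : v ∈ V.wtSpace h)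
    (B : ℕ) (hB : ∀ i : ℕ, B ≤ i → (V.L 1)^[i] v = 0) (n : ℤ) (w : W.carrier) :
    W.dmode v n α w = ∑ i ∈ Finset.range B, ((-1 : ℂ) ^ h / (Nat.factorial i : ℂ)) *
      α (W.op ((V.L 1)^[i] v) (2 * h - n - (i : ℤ) - 2) w) := by
  unfold WeakModule.dmode
  rw [finsum_eq_single _ h]
  · rw [V.proj_eq h v hv]
    refine finsum_eq_sum_of_support_subset _ fun i hi => ?_
    by_contra hc
    apply hi
    have : B ≤ i := by simpa using hc
    simp only [term_zero W α hα (hB i this), mul_zero]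
  · intro g hg
    refine finsum_eq_zero_of_forall_eq_zero fun i => ?_
    rw [V.proj_ne h g hg.symm v hv, term_zero W α hα (L1_iter_zero i), mul_zero]

theorem forward_hom (hα : α ∈ W.DW) (N : ℤ) (hN : ∀ n : ℤ, n < N → V.wtSpace n = ⊥) (d : ℕ) :
    ∀ h : ℤ, h < N + d → ∀ v ∈ V.wtSpace h, P W α v := by
  induction d with
  | zero =>
    intro h hh v hv
    rw [hN h (by simpa using hh)] at hv
    rw [(Submodule.mem_bot ℂ).1 hv]
    exact P_zero W α hα.1
  | succ d ih =>
    intro h hh v hv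
    push_cast at hh
    obtain ⟨B, hB⟩ := L1_iter_bound (V := V) h
    have e1 : ∀ᶠ n : ℤ in atTop, ∀ w : W.carrier, W.dmode v n α w = 0 :=
      eventually_atTop.2 (hα.2 v)
    have e2 : ∀ᶠ n : ℤ in atTop, ∀ i ∈ Finset.range B, ∀ w : W.carrier,
        α (W.op ((V.L 1)^[i + 1] v) (2 * h - n - ((i + 1 : ℕ) : ℤ) - 2) w) = 0 :=
      (Filter.eventually_all_finset _).2 fun i _ => P.shift W α
        (ih (h - (i + 1 : ℕ)) (by push_cast; omega) _ (L1_iter_mem h v hv (i + 1))) h (i + 1)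
    have e3 : ∀ᶠ n : ℤ in atTop, ∀ w : W.carrier, α (W.op v (2 * h - n - 2) w) = 0 := by
      filter_upwards [e1, e2] with n h1 h2 w
      have h3 := h1 w
      rw [dmode_hom W α hα.1 h v hv (B + 1) (fun i hi => hB v hv i (by omega)),
        Finset.sum_range_succ', Finset.sum_eq_zero (fun i hi => by rw [h2 i hi w, mul_zero])] at h3
      have hne : ((-1 : ℂ) ^ h) ≠ 0 := zpow_ne_zero _ (by norm_num)
      simpa [hne] using h3
    have t : Tendsto (fun m : ℤ => 2 * h - m - 2) atBot atTop := by
      refine tendsto_atTop.2 fun b => ?_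
      filter_upwards [eventually_le_atBot (2 * h - 2 - b)] with n hn
      omega
    filter_upwards [t.eventually e3] with m hm w
    have := hm w
    rwa [show 2 * h - (2 * h - m - 2) - 2 = m by ring] at this

theorem forward (hα : α ∈ W.DW) (v : V.carrier) : P W α v := by
  obtain ⟨N, hN⟩ := V.lower_trunc
  rw [← V.proj_sum v]
  refine finsum_induction (P W α) (P_zero W α hα.1) (fun _ _ => P_add W α hα.1) fun h => ?_
  exact forward_hom W α hα N hN ((h - N + 1).toNat) h (by omega) _ (V.proj_mem h v)

end DWProof

/-- Characterization of `D(W)`: a linear functional `α ∈ W*` lies in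
`D(W)` iff for every `v ∈ V` there is `k ∈ ℤ` with `vₘW ⊆ ker α` for all `m ≤ k`;
equivalently, iff for every `v ∈ V` there is `r ∈ ℤ` such that
`x^r ⟨α, Y(v,x)w⟩ ∈ ℂ[x⁻¹]` for all `w ∈ W` (the coefficient of `x^{r-m-1}` being
`⟨α, vₘw⟩`, this says `⟨α, vₘw⟩ = 0` whenever `r - m - 1 > 0`). -/
theorem mem_DW_characterization (V : VOA) (W : WeakModule V)
    (α : W.carrier → ℂ) (hα : IsLinearMap ℂ α) :
    (α ∈ W.DW ↔
      ∀ v : V.carrier, ∃ k : ℤ, ∀ m : ℤ, m ≤ k → ∀ w : W.carrier, α (W.op v m w) = 0) ∧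
    (α ∈ W.DW ↔
      ∀ v : V.carrier, ∃ r : ℤ, ∀ m : ℤ, 0 < r - m - 1 →
        ∀ w : W.carrier, α (W.op v m w) = 0) := by
  have h1 : α ∈ W.DW ↔
      ∀ v : V.carrier, ∃ k : ℤ, ∀ m : ℤ, m ≤ k → ∀ w : W.carrier, α (W.op v m w) = 0 := by
    constructor
    · intro h v
      exact (DWProof.P_iff W α v).1 (DWProof.forward W α h v)
    · intro h
      exact DWProof.backward W α hα fun v => (DWProof.P_iff W α v).2 (h v)
  refine ⟨h1, h1.trans (forall_congr' fun v => ⟨?_, ?_⟩)⟩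
  · rintro ⟨k, hk⟩
    exact ⟨k, fun m hm => hk m (by omega)⟩
  · rintro ⟨r, hr⟩
    exact ⟨r - 2, fun m hm => hr m (by omega)⟩
end

section
/- Let V be a vertex operator algebra, W a weak V-module, and U a linear subspace of W. Viewing (W/U)* as a subspace of W* in the natural way, one has (W/U)* ⊆ D(W) if and only if for every v ∈ V there exists k ∈ ℤ such that v_m W ⊆ U for all m ≤ k. -/
theorem aux_L1_iter (V : VOA) (h : ℤ) (u : V.carrier) (hu : u ∈ V.wtSpace h) (i : ℕ) :
    (V.L 1)^[i] u ∈ V.wtSpace (h - (i : ℤ)) := by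
  induction i with
  | zero => simpa using hu
  | succ i ih =>
    rw [Function.iterate_succ_apply']
    have := V.op_wt 2 (h - i) (1 + 1) V.omega V.omega_wt _ ih
    have e : (2 : ℤ) + (h - i) - (1 + 1) - 1 = h - ((i + 1 : ℕ) : ℤ) := by push_cast; ring
    rw [e] at this
    exact this

theorem aux_op_zero {V : VOA} (W : WeakModule V) (m : ℤ) (w : W.carrier) :
    W.op 0 m w = 0 := (W.op_linear_left m w).map_zero

theorem aux_L1_zero (V : VOA) (i : ℕ) : (V.L 1)^[i] (0 : V.carrier) = 0 := by
  induction i with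
  | zero => rfl
  | succ i ih =>
    rw [Function.iterate_succ_apply', ih]
    exact (V.op_linear_right V.omega (1 + 1)).map_zero

theorem aux_lower (k : ℕ → ℤ) (d : ℕ) : ∃ K : ℤ, ∀ i < d, K ≤ k i := by
  obtain ⟨K, hK⟩ := ((Finset.range d).image k).bddBelow
  exact ⟨K, fun i hi => hK (Finset.mem_coe.2 (Finset.mem_image_of_mem _ (Finset.mem_range.2 hi)))⟩

theorem aux_homog {V : VOA} (W : WeakModule V) (α : W.carrier → ℂ) (hα : α ∈ W.DW) (N : ℤ)
    (hN : ∀ n : ℤ, n < N → V.wtSpace n = ⊥) (d : ℕ) :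
    ∀ h : ℤ, h < N + d → ∀ v ∈ V.wtSpace h,
      ∃ k : ℤ, ∀ m : ℤ, m ≤ k → ∀ w : W.carrier, α (W.op v m w) = 0 := by
  induction d with
  | zero =>
    intro h hh v hv
    rw [hN h (by simpa using hh), Submodule.mem_bot] at hv
    exact ⟨0, fun m _ w => by rw [hv, aux_op_zero, hα.1.map_zero]⟩
  | succ d ih =>
    intro h hh v hv
    have h1 : ∀ i : ℕ, ∃ k : ℤ, ∀ m : ℤ, m ≤ k → ∀ w : W.carrier,
        α (W.op ((V.L 1)^[i + 1] v) m w) = 0 := fun i =>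
      ih (h - ((i + 1 : ℕ) : ℤ)) (by push_cast at hh ⊢; omega) _ (aux_L1_iter V h v hv (i + 1))
    choose k hk using h1
    obtain ⟨K, hK⟩ := aux_lower k d
    have h2 : ∀ i : ℕ, ∀ m : ℤ, m ≤ K → ∀ w : W.carrier,
        α (W.op ((V.L 1)^[i + 1] v) m w) = 0 := by
      intro i m hm w
      by_cases hi : i < d
      · exact hk i m (hm.trans (hK i hi)) w
      · have := aux_L1_iter V h v hv (i + 1)
        rw [hN _ (by push_cast at hh ⊢; omega), Submodule.mem_bot] at this
        rw [this, aux_op_zero, hα.1.map_zero]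
    obtain ⟨M, hM⟩ := hα.2 v
    refine ⟨min K (2 * h - 2 - M), fun m hm w => ?_⟩
    have h3 := hM (2 * h - 2 - m) (by have := hm.trans (min_le_right _ _); omega) w
    have hmK : m ≤ K := hm.trans (min_le_left _ _)
    unfold WeakModule.dmode at h3
    rw [finsum_eq_single _ h, finsum_eq_single _ 0] at h3
    · rw [V.proj_eq h v hv] at h3
      have e : 2 * h - (2 * h - 2 - m) - ((0 : ℕ) : ℤ) - 2 = m := by push_cast; ring
      rw [e] at h3
      have hne : ((-1 : ℂ) ^ h) ≠ 0 := zpow_ne_zero _ (by norm_num)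
      simpa [hne] using h3
    · intro i hi
      obtain ⟨j, rfl⟩ := Nat.exists_eq_succ_of_ne_zero hi
      rw [V.proj_eq h v hv, h2 j _ (by push_cast; omega), mul_zero]
    · intro g hg
      rw [V.proj_ne h g hg.symm v hv]
      simp [aux_L1_zero, aux_op_zero, hα.1.map_zero]

theorem aux_all {V : VOA} (W : WeakModule V) (α : W.carrier → ℂ) (hα : α ∈ W.DW)
    (v : V.carrier) :
    ∃ k : ℤ, ∀ m : ℤ, m ≤ k → ∀ w : W.carrier, α (W.op v m w) = 0 := by
  obtain ⟨N, hN⟩ := V.lower_trunc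
  rw [← V.proj_sum v]
  refine finsum_induction (fun v : V.carrier =>
    ∃ k : ℤ, ∀ m : ℤ, m ≤ k → ∀ w : W.carrier, α (W.op v m w) = 0) ?_ ?_ ?_
  · exact ⟨0, fun m _ w => by rw [aux_op_zero, hα.1.map_zero]⟩
  · rintro x y ⟨k, hk⟩ ⟨l, hl⟩
    refine ⟨min k l, fun m hm w => ?_⟩
    rw [(W.op_linear_left m w).map_add, hα.1.map_add, hk m (hm.trans (min_le_left _ _)),
      hl m (hm.trans (min_le_right _ _)), add_zero]
  · intro h
    exact aux_homog W α hα N hN (h - N + 1).toNat h (by omega) _ (V.proj_mem h v)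

/-- A countable family of nonzero vectors over `ℂ` admits a functional nonvanishing on all. -/
theorem aux_functional {Q : Type*} [AddCommGroup Q] [Module ℂ Q] (x : ℕ → Q)
    (hx : ∀ j, x j ≠ 0) : ∃ f : Q →ₗ[ℂ] ℂ, ∀ j, f (x j) ≠ 0 := by
  classical
  let P := Submodule.span ℂ (Set.range x)
  let b := Module.Basis.ofVectorSpace ℂ P
  have hc : Countable (Module.Basis.ofVectorSpaceIndex ℂ P) := by
    rw [← Cardinal.mk_le_aleph0_iff, b.mk_eq_rank'']
    exact (rank_span_le _).trans (Cardinal.mk_le_aleph0_iff.2 (Set.countable_range x).to_subtype)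
  obtain ⟨e, he⟩ := exists_injective_nat (Module.Basis.ofVectorSpaceIndex ℂ P)
  let Φ : P →ₗ[ℂ] Polynomial ℂ :=
    ((Polynomial.basisMonomials ℂ).repr.symm : (ℕ →₀ ℂ) →ₗ[ℂ] Polynomial ℂ) ∘ₗ
      Finsupp.lmapDomain ℂ ℂ e ∘ₗ (b.repr : P →ₗ[ℂ] _)
  have hΦ : Function.Injective Φ :=
    (Polynomial.basisMonomials ℂ).repr.symm.injective.comp
      ((Finsupp.mapDomain_injective he).comp b.repr.injective)
  let y : ℕ → P := fun j => ⟨x j, Submodule.subset_span ⟨j, rfl⟩⟩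
  have hy : ∀ j, Φ (y j) ≠ 0 := fun j h0 => by
    have := hΦ (h0.trans (map_zero Φ).symm)
    exact hx j (congrArg Subtype.val this)
  have hcount : (⋃ j, {t : ℂ | (Φ (y j)).IsRoot t}).Countable :=
    Set.countable_iUnion fun j => (Polynomial.finite_setOfPred_isRoot (hy j)).countable
  obtain ⟨t, ht⟩ : ∃ t, t ∉ ⋃ j, {t : ℂ | (Φ (y j)).IsRoot t} := by
    by_contra! hcon
    exact not_countable_complex (by rwa [Set.eq_univ_of_forall hcon] at hcount)
  obtain ⟨f, hf⟩ := LinearMap.exists_extend (Polynomial.leval t ∘ₗ Φ)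
  refine ⟨f, fun j h0 => ht (Set.mem_iUnion.2 ⟨j, ?_⟩)⟩
  have := LinearMap.congr_fun hf (y j)
  simp only [LinearMap.comp_apply, Submodule.subtype_apply] at this
  exact this.symm.trans h0

/-- For a subspace `U` of a weak `V`-module `W`, viewing `(W/U)*` as
the subspace of `W*` of functionals vanishing on `U`, one has `(W/U)* ⊆ D(W)` iff for
every `v ∈ V` there exists `k ∈ ℤ` such that `vₘW ⊆ U` for all `m ≤ k`. -/
theorem quotient_dual_subset_DW_iff (V : VOA) (W : WeakModule V)
    (U : Submodule ℂ W.carrier) :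
    (∀ α : W.carrier → ℂ, IsLinearMap ℂ α → (∀ u ∈ U, α u = 0) → α ∈ W.DW) ↔
      ∀ v : V.carrier, ∃ k : ℤ, ∀ m : ℤ, m ≤ k → ∀ w : W.carrier, W.op v m w ∈ U := by
  constructor
  · intro H v
    by_contra! hcon
    choose m hm w hw using fun j : ℕ => hcon (-(j : ℤ))
    obtain ⟨f, hf⟩ := aux_functional (fun j => U.mkQ (W.op v (m j) (w j))) (fun j h0 => by
      rw [Submodule.mkQ_apply, Submodule.Quotient.mk_eq_zero] at h0
      exact hw j h0)
    have hD := H (f ∘ₗ U.mkQ) (LinearMap.isLinear _) (fun u hu => by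
      have : U.mkQ u = 0 := by rwa [Submodule.mkQ_apply, Submodule.Quotient.mk_eq_zero]
      rw [LinearMap.comp_apply, this, map_zero])
    obtain ⟨k, hk⟩ := aux_all W _ hD v
    exact hf k.natAbs (hk (m k.natAbs) ((hm _).trans (by omega)) (w _))
  · intro H α hα hU
    refine ⟨hα, fun v => ?_⟩
    obtain ⟨N, hN⟩ := V.lower_trunc
    -- bound for a single weight
    have h1 : ∀ h : ℤ, ∃ M : ℤ, ∀ n : ℤ, M ≤ n → ∀ (i : ℕ) (w : W.carrier),
        α (W.op ((V.L 1)^[i] (V.proj h v)) (2 * h - n - (i : ℤ) - 2) w) = 0 := by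
      intro h
      choose k hk using fun i : ℕ => H ((V.L 1)^[i] (V.proj h v))
      obtain ⟨K, hK⟩ := aux_lower k (h - N + 1).toNat
      refine ⟨2 * h - 2 - K, fun n hn i w => ?_⟩
      by_cases hi : i < (h - N + 1).toNat
      · exact hU _ (hk i _ ((by omega : _ ≤ K).trans (hK i hi)) w)
      · have := aux_L1_iter V h _ (V.proj_mem h v) i
        rw [hN _ (by omega), Submodule.mem_bot] at this
        rw [this, aux_op_zero, hα.map_zero]
    choose M hM using h1
    obtain ⟨C, hC⟩ := (((V.proj_finite v).toFinset.image M)).bddAbove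
    refine ⟨C, fun n hn w => ?_⟩
    unfold WeakModule.dmode
    refine (finsum_congr fun h => ?_).trans finsum_zero
    refine (finsum_congr fun i => ?_).trans finsum_zero
    by_cases hz : V.proj h v = 0
    · rw [hz, aux_L1_zero, aux_op_zero, hα.map_zero, mul_zero]
    · have : M h ≤ C := hC (Finset.mem_coe.2 (Finset.mem_image_of_mem _ (by simpa using hz)))
      rw [hM h n (this.trans hn), mul_zero]
end
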